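/- Let p > 0 and K ⊂ ℝⁿ a convex body with 0 ∈ int K. Then ∫_{Sⁿ⁻¹} (F_K(u) / h_K(u)^{p-1})^{n/(n+p)} dH^{n-1}(u) = ∫_{∂K} (H_K(x) / h_K(ν_K(x))^{(p-1)n/p})^{p/(n+p)} dH^{n-1}(x), where F_K is the generalized curvature function and H_K the generalized Gauss curvature. -/

import Mathlib

open MeasureTheory Metric Set Filter
open scoped RealInnerProductSpace ENNReal NNReal Topology

noncomputable section

abbrev Euc (n : ℕ) := EuclideanSpace ℝ (Fin n)

def IsConvexBody {n : ℕ} (K : Set (Euc n)) : Prop :=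
  IsCompact K ∧ Convex ℝ K ∧ (interior K).Nonempty

def IsOuterNormalAt {n : ℕ} (K : Set (Euc n)) (u x : Euc n) : Prop :=
  x ∈ frontier K ∧ ∀ y ∈ K, ⟪y, u⟫ ≤ ⟪x, u⟫

open Classical in
/-- The Gauss map: at a regular boundary point, the unique outer unit normal. -/
def gaussMap {n : ℕ} (K : Set (Euc n)) (x : Euc n) : Euc n :=
  if h : ∃ u, ‖u‖ = 1 ∧ IsOuterNormalAt K u x then h.choose else 0

open Classical in
/-- The inverse Gauss map: at a regular normal vector, the unique boundary point
with that outer normal. -/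
def gaussMapInv {n : ℕ} (K : Set (Euc n)) (u : Euc n) : Euc n :=
  if h : ∃ x, IsOuterNormalAt K u x then h.choose else 0

/-- The (n-1)-th curvature measure: (n-1)-dimensional Hausdorff measure on the boundary. -/
def bdryMeasure (n : ℕ) (K : Set (Euc n)) : Measure (Euc n) :=
  (Measure.hausdorffMeasure ((n : ℝ) - 1)).restrict (frontier K)

/-- The 0-th curvature measure: C₀(K,β) = H^{n-1}(ν(K,β)), realized as the pushforward of
the spherical Hausdorff measure under the inverse Gauss map. -/
def curv0 (n : ℕ) (K : Set (Euc n)) : Measure (Euc n) :=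
  Measure.map (gaussMapInv K)
    ((Measure.hausdorffMeasure ((n : ℝ) - 1)).restrict (Metric.sphere (0 : Euc n) 1))

/-- The generalized Gauss curvature H_K, as density of C₀(K,·) w.r.t. C_{n-1}(K,·). -/
def gaussCurv (n : ℕ) (K : Set (Euc n)) : Euc n → ℝ≥0∞ :=
  Measure.rnDeriv (curv0 n K) (bdryMeasure n K)

/-- The surface area measure S_K, pushforward of boundary Hausdorff measure by the Gauss map. -/
def surfaceMeasure (n : ℕ) (K : Set (Euc n)) : Measure (Euc n) :=
  Measure.map (gaussMap K) (bdryMeasure n K)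

/-- The generalized curvature function F_K, as density of S_K w.r.t. spherical Hausdorff measure. -/
def curvFn (n : ℕ) (K : Set (Euc n)) : Euc n → ℝ≥0∞ :=
  Measure.rnDeriv (surfaceMeasure n K)
    ((Measure.hausdorffMeasure ((n : ℝ) - 1)).restrict (Metric.sphere (0 : Euc n) 1))

/-- The support function of K. -/
def suppFn {n : ℕ} (K : Set (Euc n)) (x : Euc n) : ℝ :=
  sSup ((fun y => ⟪y, x⟫) '' K)



theorem abstract_duality {E : Type*} [MeasurableSpace E] (μ σ : Measure E) [IsFiniteMeasure μ]
    [IsFiniteMeasure σ] (ν τ : E → E) (hν : Measurable ν) (hτ : Measurable τ)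
    (B0 S0 : Set E) (hB0 : MeasurableSet B0) (hS0 : MeasurableSet S0)
    (hμB : μ B0ᶜ = 0) (hσS : σ S0ᶜ = 0)
    (h1 : ∀ x ∈ B0, ν x ∈ S0 → τ (ν x) = x) (h2 : ∀ u ∈ S0, τ u ∈ B0 → ν (τ u) = u)
    (a b : ℝ) (ha : 0 < a) (hb : 0 < b) (hab : a + b = 1) (k : E → ℝ≥0∞) (hk : Measurable k) :
    ∫⁻ u, (Measure.map ν μ).rnDeriv σ u ^ a * k u ∂σ =
      ∫⁻ x, (Measure.map τ σ).rnDeriv μ x ^ b * k (ν x) ∂μ := by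
  set ρ := Measure.map ν μ with hρdef
  have : IsFiniteMeasure ρ := Measure.isFiniteMeasure_map μ ν
  set F := ρ.rnDeriv σ with hF
  have hFm : Measurable F := Measure.measurable_rnDeriv _ _
  have hFfin : σ {u | F u = ∞} = 0 := by
    have := Measure.rnDeriv_lt_top ρ σ
    rw [ae_iff] at this
    simpa [hF] using this
  obtain ⟨A, hA, hA1, hA2⟩ := Measure.mutuallySingular_singularPart ρ σ
  have key : ∀ T : Set E, MeasurableSet T → T ⊆ A → ∀ g : E → ℝ≥0∞, Measurable g →
      ∫⁻ u in T, g u ∂ρ = ∫⁻ u in T, F u * g u ∂σ := by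
    intro T hT hTA g hg
    have e : ρ.restrict T = (σ.withDensity F).restrict T := by
      ext C hC
      rw [Measure.restrict_apply hC, Measure.restrict_apply hC]
      conv_lhs => rw [Measure.haveLebesgueDecomposition_add ρ σ]
      rw [Measure.add_apply, measure_mono_null (inter_subset_right.trans hTA) hA1, zero_add]
    rw [e, setLIntegral_withDensity_eq_setLIntegral_mul σ hFm hg hT]
    rfl
  have hZ : MeasurableSet {u | F u = 0} := hFm (measurableSet_singleton 0)
  have hI : MeasurableSet {u | F u = ∞} := hFm (measurableSet_singleton ∞)
  set S1 := (S0 ∩ τ ⁻¹' B0) ∩ (A ∩ ({u | F u = 0}ᶜ ∩ {u | F u = ∞}ᶜ)) with hS1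
  have hS1m : MeasurableSet S1 :=
    (hS0.inter (hτ hB0)).inter (hA.inter (hZ.compl.inter hI.compl))
  have hS1A : S1 ⊆ A := fun u hu => hu.2.1
  set B1 := B0 ∩ ν ⁻¹' S1 with hB1
  have hB1m : MeasurableSet B1 := hB0.inter (hν hS1m)
  have hB0ae : ∀ᵐ x ∂μ, x ∈ B0 := by rw [ae_iff]; exact hμB
  set H' : E → ℝ≥0∞ := B1.indicator (fun x => (F (ν x))⁻¹) with hH'
  have hH'm : Measurable H' := (hFm.comp hν).inv.indicator hB1m
  have step1 : Measure.map τ (σ.restrict S1) = μ.withDensity H' := by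
    ext C hC
    rw [Measure.map_apply hτ hC, Measure.restrict_apply (hτ hC), withDensity_apply _ hC, hH',
      lintegral_indicator hB1m, Measure.restrict_restrict hB1m]
    have hTm : MeasurableSet (τ ⁻¹' C ∩ S1) := (hτ hC).inter hS1m
    calc σ (τ ⁻¹' C ∩ S1) = ∫⁻ u in τ ⁻¹' C ∩ S1, 1 ∂σ := by simp
      _ = ∫⁻ u in τ ⁻¹' C ∩ S1, F u * (F u)⁻¹ ∂σ := by
          refine setLIntegral_congr_fun hTm fun u hu => ?_
          exact (ENNReal.mul_inv_cancel hu.2.2.2.1 hu.2.2.2.2).symm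
      _ = ∫⁻ u in τ ⁻¹' C ∩ S1, (F u)⁻¹ ∂ρ :=
          (key _ hTm (inter_subset_right.trans hS1A) _ hFm.inv).symm
      _ = ∫⁻ x in ν ⁻¹' (τ ⁻¹' C ∩ S1), (F (ν x))⁻¹ ∂μ :=
          setLIntegral_map hTm hFm.inv hν
      _ = ∫⁻ x in B1 ∩ C, (F (ν x))⁻¹ ∂μ := by
          refine setLIntegral_congr ?_
          filter_upwards [hB0ae] with x hx
          apply propext
          change (τ (ν x) ∈ C ∧ ν x ∈ S1) ↔ ((x ∈ B0 ∧ ν x ∈ S1) ∧ x ∈ C)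
          constructor
          · rintro ⟨h, h'⟩
            rw [h1 x hx h'.1.1] at h
            exact ⟨⟨hx, h'⟩, h⟩
          · rintro ⟨⟨_, h'⟩, h⟩
            refine ⟨?_, h'⟩
            rwa [h1 x hx h'.1.1]
  have hAZ : MeasurableSet (A ∩ {u | F u = 0}) := hA.inter hZ
  have step2 : Measure.MutuallySingular (Measure.map τ (σ.restrict S1ᶜ)) μ := by
    refine ⟨B0 ∩ (ν ⁻¹' (A ∩ {u | F u = 0}))ᶜ, hB0.inter (hν hAZ).compl, ?_, ?_⟩
    · rw [Measure.map_apply hτ (hB0.inter (hν hAZ).compl),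
        Measure.restrict_apply (hτ (hB0.inter (hν hAZ).compl))]
      have hn : σ (S0ᶜ ∪ (Aᶜ ∪ {u | F u = ∞})) = 0 :=
        measure_union_null hσS (measure_union_null hA2 hFfin)
      refine measure_mono_null ?_ hn
      rintro u ⟨⟨hu1, hu2⟩, hu3⟩
      by_contra hc
      simp only [mem_union, mem_compl_iff, not_or, not_not] at hc
      obtain ⟨c1, c2, c3⟩ := hc
      apply hu3
      refine ⟨⟨c1, hu1⟩, c2, ?_, c3⟩
      intro hz
      apply hu2
      change ν (τ u) ∈ A ∩ {u | F u = 0}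
      rw [h2 u c1 hu1]
      exact ⟨c2, hz⟩
    · have hn : μ (ν ⁻¹' (A ∩ {u | F u = 0})) = 0 := by
        rw [← Measure.map_apply hν hAZ]
        have := key _ hAZ inter_subset_left (fun _ => 1) measurable_const
        rw [setLIntegral_one] at this
        rw [← hρdef, this, setLIntegral_congr_fun (g := fun _ => 0) hAZ]
        · simp
        · intro u hu
          have : F u = 0 := hu.2
          simp [this]
      rw [compl_inter, compl_compl]
      exact measure_union_null hμB hn
  have step3 : H' =ᵐ[μ] (Measure.map τ σ).rnDeriv μ := by
    refine Measure.eq_rnDeriv hH'm step2 ?_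
    rw [← step1, ← Measure.map_add _ _ hτ, add_comm, Measure.restrict_add_restrict_compl hS1m]
  have hL : ∫⁻ u, F u ^ a * k u ∂σ = ∫⁻ u in S1, F u ^ a * k u ∂σ := by
    rw [← lintegral_indicator hS1m]
    refine lintegral_congr_ae ?_
    have hTm : MeasurableSet ((S0 ∩ (τ ⁻¹' B0)ᶜ) ∩ A) := (hS0.inter (hτ hB0).compl).inter hA
    have hz : ∫⁻ u in (S0 ∩ (τ ⁻¹' B0)ᶜ) ∩ A, F u ∂σ = 0 := by
      have := key _ hTm inter_subset_right (fun _ => 1) measurable_const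
      simp only [mul_one] at this
      rw [← this, setLIntegral_one, hρdef, Measure.map_apply hν hTm]
      refine measure_mono_null ?_ hμB
      rintro x ⟨⟨hx1, hx2⟩, hx3⟩ hx
      apply hx2
      change τ (ν x) ∈ B0
      rwa [h1 x hx hx1]
    rw [setLIntegral_eq_zero_iff hTm hFm] at hz
    have e1 : ∀ᵐ u ∂σ, u ∈ S0 := by rw [ae_iff]; exact hσS
    have e2 : ∀ᵐ u ∂σ, u ∈ A := by rw [ae_iff]; exact hA2
    have e3 : ∀ᵐ u ∂σ, F u ≠ ∞ := by rw [ae_iff]; simpa using hFfin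
    filter_upwards [hz, e1, e2, e3] with u hu u1 u2 u3
    by_cases hu1 : u ∈ S1
    · simp [hu1]
    · have : F u = 0 := by
        by_contra hne
        by_cases ht : u ∈ τ ⁻¹' B0
        · exact hu1 ⟨⟨u1, ht⟩, u2, hne, u3⟩
        · exact hne (hu ⟨⟨u1, ht⟩, u2⟩)
      simp [hu1, this, ha]
  have hR : ∫⁻ x, (Measure.map τ σ).rnDeriv μ x ^ b * k (ν x) ∂μ =
      ∫⁻ x in ν ⁻¹' S1, ((F (ν x))⁻¹ ^ b * k (ν x)) ∂μ := by
    rw [← lintegral_indicator (hν hS1m)]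
    refine lintegral_congr_ae ?_
    filter_upwards [step3, hB0ae] with x hx hx0
    rw [← hx]
    by_cases hu1 : ν x ∈ S1
    · have : x ∈ B1 := ⟨hx0, hu1⟩
      have h' : x ∈ ν ⁻¹' S1 := hu1
      simp [hH', this, h']
    · have : x ∉ B1 := fun h => hu1 h.2
      have h' : x ∉ ν ⁻¹' S1 := hu1
      simp [hH', this, h', hb]
  rw [hL, hR, ← setLIntegral_map (f := fun u => (F u)⁻¹ ^ b * k u) hS1m
    ((hFm.inv.pow_const b).mul hk) hν, ← hρdef,
    key S1 hS1m hS1A (fun u => (F u)⁻¹ ^ b * k u) ((hFm.inv.pow_const b).mul hk)]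
  refine setLIntegral_congr_fun hS1m fun u hu => ?_
  have n0 : F u ≠ 0 := hu.2.2.1
  have nt : F u ≠ ∞ := hu.2.2.2
  rw [← mul_assoc, ENNReal.inv_rpow, ← ENNReal.rpow_neg]
  congr 1
  have : a = 1 + -b := by linarith
  rw [this, ENNReal.rpow_add _ _ n0 nt, ENNReal.rpow_one]

/-- affine chart parametrisation of the hyperplane `x i = s`. -/
def chartLift {m : ℕ} (i : Fin (m + 1)) (s : ℝ) (y : Fin m → ℝ) : Euc (m + 1) :=
  WithLp.toLp 2 (i.insertNth s y)

lemma chartLift_same {m : ℕ} (i : Fin (m + 1)) (s : ℝ) (y : Fin m → ℝ) :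
    chartLift i s y i = s := by simp [chartLift]

lemma chartLift_succAbove {m : ℕ} (i : Fin (m + 1)) (s : ℝ) (y : Fin m → ℝ) (j : Fin m) :
    chartLift i s y (i.succAbove j) = y j := by simp [chartLift]

lemma chartLift_inner {m : ℕ} (i : Fin (m + 1)) (s : ℝ) (y : Fin m → ℝ) (v : Euc (m + 1)) :
    ⟪chartLift i s y, v⟫ = s * v i + ∑ j, y j * v (i.succAbove j) := by
  rw [PiLp.inner_apply, Fin.sum_univ_succAbove _ i]
  simp [chartLift_same, chartLift_succAbove, mul_comm]

lemma chartLift_lipschitz {m : ℕ} (i : Fin (m + 1)) (s : ℝ) :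
    ∃ C : ℝ≥0, LipschitzWith C (chartLift i s) := by
  have h2 : LipschitzWith 1 (fun y : Fin m → ℝ => (i.insertNth s y : Fin (m + 1) → ℝ)) := by
    refine LipschitzWith.of_dist_le_mul fun x y => ?_
    rw [NNReal.coe_one, one_mul, dist_pi_le_iff dist_nonneg]
    intro j
    refine Fin.succAboveCases i ?_ ?_ j
    · simp
    · intro j
      simpa using dist_le_pi_dist x y j
  exact ⟨_, (PiLp.lipschitzWith_toLp 2 (fun _ : Fin (m + 1) => ℝ)).comp h2⟩

lemma norm_chartLift {m : ℕ} (i : Fin (m + 1)) (s : ℝ) (hs : |s| = 1) (y : Fin m → ℝ) :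
    1 ≤ ‖chartLift i s y‖ := by
  have := PiLp.norm_apply_le (chartLift i s y) i
  rw [chartLift_same, Real.norm_eq_abs, hs] at this
  exact this

/-- the chart of the surface `G = 1`. -/
def surfChart {m : ℕ} (G : Euc (m + 1) → ℝ) (i : Fin (m + 1)) (s : ℝ) (y : Fin m → ℝ) :
    Euc (m + 1) := (G (chartLift i s y))⁻¹ • chartLift i s y

lemma surfChart_lipschitz {m : ℕ} (G : Euc (m + 1) → ℝ) (L : ℝ≥0) (hG : LipschitzWith L G)
    (c : ℝ) (hc : 0 < c) (hGc : ∀ x, c * ‖x‖ ≤ G x) (i : Fin (m + 1)) (s : ℝ) (hs : |s| = 1) :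
    ∃ C : ℝ≥0, LipschitzWith C (surfChart G i s) := by
  obtain ⟨C, hC⟩ := chartLift_lipschitz (m := m) i s
  refine ⟨(1 / c + L / c ^ 2).toNNReal * C, LipschitzWith.of_dist_le_mul fun y z => ?_⟩
  have hyz := hC.dist_le_mul y z
  have hn1 := norm_chartLift i s hs y
  have hn2 := norm_chartLift i s hs z
  have hG1 := hG.dist_le_mul (chartLift i s y) (chartLift i s z)
  unfold surfChart
  generalize chartLift i s y = p at *
  generalize chartLift i s z = q at *
  have gp := hGc p
  have gq := hGc q
  have gp0 : 0 < G p := by nlinarith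
  have gq0 : 0 < G q := by nlinarith
  have gpc : c ≤ G p := by nlinarith
  have e : (G p)⁻¹ • p - (G q)⁻¹ • q =
      (G p)⁻¹ • (p - q) + ((G q - G p) * (G p)⁻¹ * (G q)⁻¹) • q := by
    have : (G q - G p) * (G p)⁻¹ * (G q)⁻¹ = (G p)⁻¹ - (G q)⁻¹ := by field_simp
    rw [this]; module
  rw [dist_eq_norm p q] at hyz hG1
  rw [dist_eq_norm ((G p)⁻¹ • p)]
  have hd : |G q - G p| ≤ L * ‖p - q‖ := by
    rw [abs_sub_comm]; simpa [Real.dist_eq] using hG1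
  have i1 : (G p)⁻¹ ≤ 1 / c := by rw [one_div]; exact inv_anti₀ hc gpc
  have i2 : (G q)⁻¹ * ‖q‖ ≤ 1 / c := by
    rw [inv_mul_le_iff₀ gq0, mul_one_div, le_div_iff₀ hc]; linarith
  calc ‖(G p)⁻¹ • p - (G q)⁻¹ • q‖
      ≤ (G p)⁻¹ * ‖p - q‖ + |G q - G p| * (G p)⁻¹ * ((G q)⁻¹ * ‖q‖) := by
        rw [e]
        refine (norm_add_le _ _).trans (le_of_eq ?_)
        rw [norm_smul, norm_smul, Real.norm_eq_abs, Real.norm_eq_abs, abs_mul, abs_mul,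
          abs_of_pos (inv_pos.2 gp0), abs_of_pos (inv_pos.2 gq0)]
        ring
    _ ≤ (1 / c) * ‖p - q‖ + (L * ‖p - q‖) * (1 / c) * (1 / c) := by gcongr
    _ = (1 / c + L / c ^ 2) * ‖p - q‖ := by field_simp
    _ ≤ (1 / c + L / c ^ 2) * (C * dist y z) := by gcongr
    _ = _ := by
      rw [NNReal.coe_mul, Real.coe_toNNReal _ (by positivity)]; ring

lemma surf_subset {m : ℕ} (G : Euc (m + 1) → ℝ)
    (hh : ∀ (t : ℝ) x, 0 < t → G (t • x) = t * G x) (hG0 : G 0 ≠ 1) (x : Euc (m + 1)) (hx : G x = 1) :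
    ∃ i : Fin (m + 1), ∃ s : ℝ, (s = 1 ∨ s = -1) ∧ ∃ y : Fin m → ℝ, ‖y‖ ≤ 1 ∧
      surfChart G i s y = x := by
  obtain ⟨i, hi⟩ := Finite.exists_max (fun i => |x i|)
  have hpos : 0 < |x i| := by
    rcases (abs_nonneg (x i)).lt_or_eq with h | h
    · exact h
    · exfalso
      apply hG0
      have : x = 0 := by
        ext j
        have := hi j
        rw [← h] at this
        simpa using le_antisymm this (abs_nonneg _)
      rw [← this, hx]
  have hs : x i / |x i| = 1 ∨ x i / |x i| = -1 := by
    rcases abs_choice (x i) with h | h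
    · left; rw [h] at hpos ⊢; exact div_self hpos.ne'
    · right
      rw [h] at hpos ⊢
      have : x i ≠ 0 := by intro h; simp [h] at hpos
      field_simp
  have e : chartLift i (x i / |x i|) (fun j => x (i.succAbove j) / |x i|) = |x i|⁻¹ • x := by
    ext j
    refine Fin.succAboveCases i ?_ ?_ j
    · rw [chartLift_same]; simp; ring
    · intro j; rw [chartLift_succAbove]; simp; ring
  refine ⟨i, x i / |x i|, hs, fun j => x (i.succAbove j) / |x i|, ?_, ?_⟩
  · rw [pi_norm_le_iff_of_nonneg zero_le_one]
    intro j
    rw [Real.norm_eq_abs, abs_div, abs_abs, div_le_one hpos]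
    exact hi _
  · rw [surfChart, e, hh _ _ (inv_pos.2 hpos), hx, mul_one, inv_inv, smul_smul,
      mul_inv_cancel₀ hpos.ne', one_smul]

lemma surf_finite {m : ℕ} (G : Euc (m + 1) → ℝ) (L : ℝ≥0) (hG : LipschitzWith L G)
    (c : ℝ) (hc : 0 < c) (hGc : ∀ x, c * ‖x‖ ≤ G x)
    (hh : ∀ (t : ℝ) x, 0 < t → G (t • x) = t * G x) (hG0 : G 0 ≠ 1) :
    (Measure.hausdorffMeasure (m : ℝ) : Measure (Euc (m + 1))) {x | G x = 1} < ∞ := by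
  have hsub : {x | G x = 1} ⊆ ⋃ i : Fin (m + 1),
      (surfChart G i 1 '' closedBall 0 1 ∪ surfChart G i (-1) '' closedBall 0 1) := by
    intro x hx
    obtain ⟨i, s, hs, y, hy, rfl⟩ := surf_subset G hh hG0 x hx
    refine mem_iUnion.2 ⟨i, ?_⟩
    rcases hs with rfl | rfl
    · exact Or.inl ⟨y, by simpa using hy, rfl⟩
    · exact Or.inr ⟨y, by simpa using hy, rfl⟩
  have hone : ∀ i : Fin (m + 1), ∀ s : ℝ, |s| = 1 →
      (Measure.hausdorffMeasure (m : ℝ) : Measure (Euc (m + 1)))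
        (surfChart G i s '' closedBall 0 1) < ∞ := by
    intro i s hs
    obtain ⟨C, hC⟩ := surfChart_lipschitz G L hG c hc hGc i s hs
    refine (hC.hausdorffMeasure_image_le (Nat.cast_nonneg m) _).trans_lt ?_
    have := hausdorffMeasure_pi_real (ι := Fin m)
    rw [Fintype.card_fin] at this
    rw [this]
    exact ENNReal.mul_lt_top (ENNReal.rpow_lt_top_of_nonneg (Nat.cast_nonneg m) ENNReal.coe_ne_top)
      measure_closedBall_lt_top
  refine (measure_mono hsub).trans_lt ((measure_iUnion_le _).trans_lt ?_)
  rw [tsum_fintype]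
  refine ENNReal.sum_lt_top.2 fun i _ => (measure_union_le _ _).trans_lt ?_
  exact ENNReal.add_lt_top.2 ⟨hone i 1 (by simp), hone i (-1) (by simp)⟩

lemma chart_unique {m : ℕ} (h : Euc (m + 1) → ℝ) (i : Fin (m + 1)) (s : ℝ) (hs : |s| = 1)
    (y : Fin m → ℝ) (hd : DifferentiableAt ℝ (fun z => h (chartLift i s z)) y)
    (v w : Euc (m + 1)) (hv : ∀ z, ⟪z, v⟫ ≤ h z) (hw : ∀ z, ⟪z, w⟫ ≤ h z)
    (hv' : ⟪chartLift i s y, v⟫ = h (chartLift i s y))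
    (hw' : ⟪chartLift i s y, w⟫ = h (chartLift i s y)) : v = w := by
  have main : ∀ v : Euc (m + 1), (∀ z, ⟪z, v⟫ ≤ h z) →
      ⟪chartLift i s y, v⟫ = h (chartLift i s y) → ∀ j,
      fderiv ℝ (fun z => h (chartLift i s z)) y (Pi.single j 1) = v (i.succAbove j) := by
    intro v hv hv' j
    let l : (Fin m → ℝ) →L[ℝ] ℝ :=
      ∑ j, v (i.succAbove j) • (ContinuousLinearMap.proj j : (Fin m → ℝ) →L[ℝ] ℝ)
    have hl : ∀ z, ⟪chartLift i s z, v⟫ = s * v i + l z := by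
      intro z
      rw [chartLift_inner]
      simp [l, mul_comm]
    have hmin : IsLocalMin (fun z => h (chartLift i s z) - (s * v i + l z)) y := by
      refine Filter.Eventually.of_forall fun z => ?_
      simp only
      rw [← hl, ← hl, hv', sub_self]
      linarith [hv (chartLift i s z)]
    have hder : HasFDerivAt (fun z => h (chartLift i s z) - (s * v i + l z))
        (fderiv ℝ (fun z => h (chartLift i s z)) y - l) y :=
      hd.hasFDerivAt.sub (l.hasFDerivAt.const_add (s * v i))
    have h0 := hmin.hasFDerivAt_eq_zero hder
    rw [sub_eq_zero.1 h0]
    simp [l, Pi.single_apply]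
  have hj : ∀ j, v (i.succAbove j) = w (i.succAbove j) := fun j => by
    rw [← main v hv hv' j, ← main w hw hw' j]
  have hi : v i = w i := by
    have e := hv'.trans hw'.symm
    rw [chartLift_inner, chartLift_inner] at e
    simp only [hj] at e
    have hs0 : s ≠ 0 := by rintro rfl; simp at hs
    exact mul_left_cancel₀ hs0 (by linarith)
  ext j
  exact Fin.succAboveCases i hi hj j

lemma surf_unique {m : ℕ} (G : Euc (m + 1) → ℝ) (L : ℝ≥0) (hG : LipschitzWith L G)
    (c : ℝ) (hc : 0 < c) (hGc : ∀ x, c * ‖x‖ ≤ G x)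
    (hh : ∀ (t : ℝ) x, 0 < t → G (t • x) = t * G x) (hG0 : G 0 ≠ 1)
    (h : Euc (m + 1) → ℝ) (M : ℝ≥0) (hL : LipschitzWith M h)
    (hhom : ∀ (t : ℝ) x, 0 < t → h (t • x) = t * h x) :
    (Measure.hausdorffMeasure (m : ℝ) : Measure (Euc (m + 1))) {x | G x = 1 ∧
      ¬ ∀ v w : Euc (m + 1), (∀ z, ⟪z, v⟫ ≤ h z) → (∀ z, ⟪z, w⟫ ≤ h z) → ⟪x, v⟫ = h x →
        ⟪x, w⟫ = h x → v = w} = 0 := by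
  set D : Fin (m + 1) → ℝ → Set (Fin m → ℝ) := fun i s =>
    {y | ¬ DifferentiableAt ℝ (fun z => h (chartLift i s z)) y} with hD
  have hone : ∀ i : Fin (m + 1), ∀ s : ℝ, |s| = 1 →
      (Measure.hausdorffMeasure (m : ℝ) : Measure (Euc (m + 1)))
        (surfChart G i s '' D i s) = 0 := by
    intro i s hs
    obtain ⟨C, hC⟩ := surfChart_lipschitz G L hG c hc hGc i s hs
    refine le_antisymm ((hC.hausdorffMeasure_image_le (Nat.cast_nonneg m) _).trans ?_) zero_le
    have := hausdorffMeasure_pi_real (ι := Fin m)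
    rw [Fintype.card_fin] at this
    rw [this]
    obtain ⟨C', hC'⟩ := chartLift_lipschitz (m := m) i s
    have hae := (hL.comp hC').ae_differentiableAt (μ := volume)
    rw [ae_iff] at hae
    have hz : volume (D i s) = 0 := hae
    rw [hz, mul_zero]
  have hnull : (Measure.hausdorffMeasure (m : ℝ) : Measure (Euc (m + 1)))
      (⋃ i : Fin (m + 1), (surfChart G i 1 '' D i 1 ∪ surfChart G i (-1) '' D i (-1))) = 0 :=
    measure_iUnion_null fun i => measure_union_null (hone i 1 (by simp)) (hone i (-1) (by simp))
  refine measure_mono_null ?_ hnull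
  rintro x ⟨hx, hnu⟩
  obtain ⟨i, s, hs, y, hy, rfl⟩ := surf_subset G hh hG0 x hx
  have hs1 : |s| = 1 := by rcases hs with rfl | rfl <;> simp
  have hy : y ∈ D i s := by
    intro hd
    apply hnu
    intro v w hv hw hv' hw'
    have hpos : 0 < G (chartLift i s y) := by
      have := norm_chartLift i s hs1 y
      have := hGc (chartLift i s y)
      nlinarith
    have hpos' := inv_pos.2 hpos
    rw [surfChart, hhom _ _ hpos', real_inner_smul_left] at hv' hw'
    exact chart_unique h i s hs1 y hd v w hv hw (mul_left_cancel₀ hpos'.ne' hv')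
      (mul_left_cancel₀ hpos'.ne' hw')
  refine mem_iUnion.2 ⟨i, ?_⟩
  rcases hs with rfl | rfl
  · exact Or.inl ⟨y, hy, rfl⟩
  · exact Or.inr ⟨y, hy, rfl⟩

/-- A selection of a compact relation is continuous where the relation is single-valued. -/
lemma selection_continuousOn {X Y : Type*} [TopologicalSpace X] [T2Space X] [TopologicalSpace Y]
    [T2Space Y] (N : Set (X × Y)) (hN : IsCompact N) (s : Set X) (f : X → Y)
    (hf : ∀ x ∈ s, (x, f x) ∈ N) (hu : ∀ x ∈ s, ∀ y, (x, y) ∈ N → y = f x) :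
    ContinuousOn f s := by
  rw [continuousOn_iff_isClosed]
  intro t ht
  refine ⟨Prod.fst '' (N ∩ Prod.snd ⁻¹' t),
    ((hN.inter_right (ht.preimage continuous_snd)).image continuous_fst).isClosed, ?_⟩
  ext x
  constructor
  · rintro ⟨h1, h2⟩
    exact ⟨⟨(x, f x), ⟨hf x h2, h1⟩, rfl⟩, h2⟩
  · rintro ⟨⟨⟨x', y⟩, ⟨h1, h2⟩, rfl⟩, h3⟩
    refine ⟨?_, h3⟩
    change f x' ∈ t
    rw [← hu x' h3 y h1]
    exact h2

lemma exists_normal {n : ℕ} (K : Set (Euc n)) (hK : IsConvexBody K) (x : Euc n)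
    (hx : x ∈ frontier K) : ∃ u, ‖u‖ = 1 ∧ IsOuterNormalAt K u x := by
  obtain ⟨hKc, hKconv, hKne⟩ := hK
  obtain ⟨f, hf⟩ := geometric_hahn_banach_open_point hKconv.interior isOpen_interior hx.2
  set v := (InnerProductSpace.toDual ℝ (Euc n)).symm f with hv
  have hfv : ∀ y, f y = ⟪y, v⟫ := fun y => by
    rw [real_inner_comm, hv, InnerProductSpace.toDual_symm_apply]
  have hle : ∀ y ∈ K, f y ≤ f x := by
    intro y hy
    have hcl : K ⊆ closure (interior K) :=
      subset_closure.trans (hKconv.closure_interior_eq_closure_of_nonempty_interior hKne).ge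
    exact closure_minimal (fun z hz => (hf z hz).le) (isClosed_le f.continuous continuous_const)
      (hcl hy)
  have hv0 : v ≠ 0 := by
    intro h
    obtain ⟨z, hz⟩ := hKne
    have := hf z hz
    rw [hfv, hfv, h] at this
    simp at this
  refine ⟨‖v‖⁻¹ • v, ?_, hx, fun y hy => ?_⟩
  · rw [norm_smul, norm_inv, norm_norm, inv_mul_cancel₀ (norm_ne_zero_iff.2 hv0)]
  · have := hle y hy
    rw [hfv, hfv] at this
    rw [real_inner_smul_right, real_inner_smul_right]
    gcongr

lemma exists_support {n : ℕ} (K : Set (Euc n)) (hK : IsConvexBody K) (u : Euc n)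
    (hu : ‖u‖ = 1) : ∃ x, IsOuterNormalAt K u x := by
  obtain ⟨hKc, hKconv, hKne⟩ := hK
  obtain ⟨x, hx, hmax⟩ := hKc.exists_isMaxOn (hKne.mono interior_subset)
    (f := fun y => ⟪y, u⟫) (by fun_prop)
  refine ⟨x, ⟨subset_closure hx, fun hint => ?_⟩, fun y hy => hmax hy⟩
  obtain ⟨r, hr, hb⟩ := Metric.isOpen_iff.1 isOpen_interior x hint
  have hy : x + (r / 2) • u ∈ K := by
    apply interior_subset
    apply hb
    rw [mem_ball, dist_eq_norm, add_sub_cancel_left, norm_smul, hu, Real.norm_eq_abs,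
      abs_of_pos (by positivity)]
    linarith
  have := hmax hy
  simp only [mem_ofPred_eq, inner_add_left, real_inner_smul_left, real_inner_self_eq_norm_sq,
    hu] at this
  linarith

lemma gaussMap_spec {n : ℕ} (K : Set (Euc n)) (hK : IsConvexBody K) (x : Euc n)
    (hx : x ∈ frontier K) : ‖gaussMap K x‖ = 1 ∧ IsOuterNormalAt K (gaussMap K x) x := by
  have h := exists_normal K hK x hx
  rw [gaussMap, dif_pos h]
  exact h.choose_spec

lemma gaussMapInv_spec {n : ℕ} (K : Set (Euc n)) (hK : IsConvexBody K) (u : Euc n)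
    (hu : ‖u‖ = 1) : IsOuterNormalAt K u (gaussMapInv K u) := by
  have h := exists_support K hK u hu
  rw [gaussMapInv, dif_pos h]
  exact h.choose_spec

/-- the compact unit normal bundle -/
def normalBundle {n : ℕ} (K : Set (Euc n)) : Set (Euc n × Euc n) :=
  {q | ‖q.2‖ = 1 ∧ IsOuterNormalAt K q.2 q.1}

lemma normalBundle_compact {n : ℕ} (K : Set (Euc n)) (hK : IsCompact K) :
    IsCompact (normalBundle K) := by
  have hc : IsCompact (frontier K ×ˢ sphere (0 : Euc n) 1) :=
    (hK.of_isClosed_subset isClosed_frontier hK.isClosed.frontier_subset).prod (isCompact_sphere 0 1)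
  have hcl : IsClosed {q : Euc n × Euc n | ∀ y ∈ K, ⟪y, q.2⟫ ≤ ⟪q.1, q.2⟫} := by
    simp only [ofPred_forall]
    refine isClosed_biInter fun y _ => isClosed_le (by fun_prop) (by fun_prop)
  convert hc.inter_right hcl using 1
  ext q
  simp only [normalBundle, IsOuterNormalAt, mem_ofPred_eq, mem_inter_iff, mem_prod,
    mem_sphere_zero_iff_norm]
  tauto

lemma suppFn_le {n : ℕ} (K : Set (Euc n)) (hK : IsCompact K) (y u : Euc n) (hy : y ∈ K) :
    ⟪y, u⟫ ≤ suppFn K u :=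
  le_csSup (hK.image (f := fun y => ⟪y, u⟫) (by fun_prop)).bddAbove ⟨y, hy, rfl⟩

lemma suppFn_eq {n : ℕ} (K : Set (Euc n)) (hK : IsCompact K) (u x : Euc n)
    (hx : IsOuterNormalAt K u x) : ⟪x, u⟫ = suppFn K u := by
  have hxK : x ∈ K := hK.isClosed.frontier_subset hx.1
  refine le_antisymm (suppFn_le K hK x u hxK) (csSup_le ⟨_, x, hxK, rfl⟩ ?_)
  rintro _ ⟨y, hy, rfl⟩
  exact hx.2 y hy

lemma suppFn_lipschitz {n : ℕ} (K : Set (Euc n)) (hK : IsCompact K) (hne : K.Nonempty) :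
    ∃ L : ℝ≥0, LipschitzWith L (suppFn K) := by
  obtain ⟨R, hR⟩ := hK.isBounded.exists_norm_le
  refine ⟨R.toNNReal, LipschitzWith.of_le_add_mul _ fun u v => csSup_le (hne.image _) ?_⟩
  rintro _ ⟨y, hy, rfl⟩
  have h1 := suppFn_le K hK y v hy
  have h2 : ⟪y, u - v⟫ ≤ ‖y‖ * ‖u - v‖ := real_inner_le_norm _ _
  have h3 : ‖y‖ ≤ R.toNNReal := (hR y hy).trans (Real.le_coe_toNNReal R)
  have h4 : ‖y‖ * ‖u - v‖ ≤ R.toNNReal * ‖u - v‖ := by gcongr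
  rw [inner_sub_right] at h2
  rw [dist_eq_norm]
  simp only
  linarith

lemma suppFn_hom {n : ℕ} (K : Set (Euc n)) (t : ℝ) (x : Euc n) (ht : 0 < t) :
    suppFn K (t • x) = t * suppFn K x := by
  unfold suppFn
  rw [← smul_eq_mul, ← Real.sSup_smul_of_nonneg ht.le]
  congr 1
  ext r
  simp [mem_smul_set, real_inner_smul_right]

/-- points of the sphere with more than one support point are null. -/
lemma sphere_reg {m : ℕ} (K : Set (Euc (m + 1))) (hK : IsConvexBody K) :
    (Measure.hausdorffMeasure (m : ℝ) : Measure (Euc (m + 1))) {u | ‖u‖ = 1 ∧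
      ¬ ∀ x y, IsOuterNormalAt K u x → IsOuterNormalAt K u y → x = y} = 0 := by
  obtain ⟨L, hL⟩ := suppFn_lipschitz K hK.1 (hK.2.2.mono interior_subset)
  have := surf_unique (m := m) (fun x => ‖x‖) 1 lipschitzWith_one_norm 1 one_pos
    (fun x => by simp) (fun t x ht => by rw [norm_smul, Real.norm_eq_abs, abs_of_pos ht])
    (by simp) (suppFn K) L hL (suppFn_hom K)
  refine measure_mono_null ?_ this
  rintro u ⟨hu, hn⟩
  refine ⟨hu, fun H => hn fun x y hx hy => ?_⟩
  have hxK : x ∈ K := hK.1.isClosed.frontier_subset hx.1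
  have hyK : y ∈ K := hK.1.isClosed.frontier_subset hy.1
  refine H x y (fun z => ?_) (fun z => ?_) ?_ ?_
  · rw [real_inner_comm]; exact suppFn_le K hK.1 x z hxK
  · rw [real_inner_comm]; exact suppFn_le K hK.1 y z hyK
  · rw [real_inner_comm]; exact suppFn_eq K hK.1 u x hx
  · rw [real_inner_comm]; exact suppFn_eq K hK.1 u y hy

lemma sphere_finite (m : ℕ) :
    (Measure.hausdorffMeasure (m : ℝ) : Measure (Euc (m + 1))) (sphere 0 1) < ∞ := by
  have := surf_finite (m := m) (fun x => ‖x‖) 1 lipschitzWith_one_norm 1 one_pos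
    (fun x => by simp) (fun t x ht => by rw [norm_smul, Real.norm_eq_abs, abs_of_pos ht])
    (by simp)
  convert this using 2
  ext x; simp

lemma gauge_facts {n : ℕ} (K : Set (Euc n)) (hK : IsConvexBody K) (h0 : (0 : Euc n) ∈ interior K) :
    (∃ L : ℝ≥0, LipschitzWith L (gauge K)) ∧ (∃ c : ℝ, 0 < c ∧ ∀ x, c * ‖x‖ ≤ gauge K x) ∧
    (∀ (t : ℝ) x, 0 < t → gauge K (t • x) = t * gauge K x) := by
  have hn : K ∈ 𝓝 (0 : Euc n) := mem_interior_iff_mem_nhds.1 h0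
  refine ⟨hK.2.1.lipschitz_gauge hn, ?_, fun t x ht => ?_⟩
  · obtain ⟨R, hR0, hR⟩ := hK.1.isBounded.subset_closedBall_lt 0 0
    refine ⟨R⁻¹, inv_pos.2 hR0, fun x => ?_⟩
    have := le_gauge_of_subset_closedBall (x := x) (absorbent_nhds_zero hn) hR0.le hR
    rwa [div_eq_inv_mul] at this
  · rw [gauge_smul_of_nonneg ht.le, smul_eq_mul]

lemma bdry_eq {n : ℕ} (K : Set (Euc n)) (hK : IsConvexBody K) (h0 : (0 : Euc n) ∈ interior K) :
    frontier K = {x | gauge K x = 1} := by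
  ext x
  exact (gauge_eq_one_iff_mem_frontier hK.2.1 (mem_interior_iff_mem_nhds.1 h0)).symm

lemma bdry_finite {m : ℕ} (K : Set (Euc (m + 1))) (hK : IsConvexBody K)
    (h0 : (0 : Euc (m + 1)) ∈ interior K) :
    (Measure.hausdorffMeasure (m : ℝ) : Measure (Euc (m + 1))) (frontier K) < ∞ := by
  obtain ⟨⟨L, hL⟩, ⟨c, hc, hc'⟩, hh⟩ := gauge_facts K hK h0
  rw [bdry_eq K hK h0]
  exact surf_finite (gauge K) L hL c hc hc' hh (by simp)

lemma inner_normal_pos {n : ℕ} (K : Set (Euc n)) (h0 : (0 : Euc n) ∈ interior K) (u x : Euc n)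
    (hu : ‖u‖ = 1) (hx : IsOuterNormalAt K u x) : 0 < ⟪x, u⟫ := by
  obtain ⟨r, hr, hb⟩ := Metric.isOpen_iff.1 isOpen_interior 0 h0
  have hy : (r / 2) • u ∈ K := by
    apply interior_subset
    apply hb
    rw [mem_ball, dist_zero_right, norm_smul, hu, Real.norm_eq_abs,
      abs_of_pos (by positivity)]
    linarith
  have := hx.2 _ hy
  rw [real_inner_smul_left, real_inner_self_eq_norm_sq, hu] at this
  linarith

lemma inner_le_gauge {n : ℕ} (K : Set (Euc n)) (h0 : (0 : Euc n) ∈ interior K) (u x : Euc n)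
    (hu : ‖u‖ = 1) (hx : IsOuterNormalAt K u x) (z : Euc n) :
    ⟪z, (⟪x, u⟫)⁻¹ • u⟫ ≤ gauge K z := by
  have hp := inner_normal_pos K h0 u x hu hx
  have habs := absorbent_nhds_zero (𝕜 := ℝ) (mem_interior_iff_mem_nhds.1 h0)
  refine le_of_forall_gt fun r hr => ?_
  obtain ⟨b, hb0, hbr, y, hy, rfl⟩ := exists_lt_of_gauge_lt habs hr
  refine lt_of_le_of_lt ?_ hbr
  have := hx.2 y hy
  simp only [real_inner_smul_right, real_inner_smul_left]
  rw [inv_mul_le_iff₀ hp, mul_comm ⟪x, u⟫]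
  gcongr

/-- boundary points with more than one outer unit normal are null. -/
lemma bdry_reg {m : ℕ} (K : Set (Euc (m + 1))) (hK : IsConvexBody K)
    (h0 : (0 : Euc (m + 1)) ∈ interior K) :
    (Measure.hausdorffMeasure (m : ℝ) : Measure (Euc (m + 1))) {x | x ∈ frontier K ∧
      ¬ ∀ u v : Euc (m + 1), ‖u‖ = 1 → ‖v‖ = 1 → IsOuterNormalAt K u x →
        IsOuterNormalAt K v x → u = v} = 0 := by
  obtain ⟨⟨L, hL⟩, ⟨c, hc, hc'⟩, hh⟩ := gauge_facts K hK h0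
  have := surf_unique (gauge K) L hL c hc hc' hh (by simp) (gauge K) L hL hh
  refine measure_mono_null ?_ this
  rintro x ⟨hx, hn⟩
  rw [bdry_eq K hK h0] at hx
  have hx1 : gauge K x = 1 := hx
  refine ⟨hx, fun H => hn fun u v hu hv hux hvx => ?_⟩
  have hpu := inner_normal_pos K h0 u x hu hux
  have hpv := inner_normal_pos K h0 v x hv hvx
  have e := H _ _ (inner_le_gauge K h0 u x hu hux) (inner_le_gauge K h0 v x hv hvx)
    (by rw [real_inner_smul_right, hx1, inv_mul_cancel₀ hpu.ne'])
    (by rw [real_inner_smul_right, hx1, inv_mul_cancel₀ hpv.ne'])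
  have en := congrArg norm e
  rw [norm_smul, norm_smul, hu, hv, mul_one, mul_one, Real.norm_of_nonneg (inv_pos.2 hpu).le,
    Real.norm_of_nonneg (inv_pos.2 hpv).le] at en
  rw [en] at e
  exact smul_right_injective _ (inv_pos.2 hpv).ne' e

theorem statement18 (n : ℕ) (hn : 0 < n) (p : ℝ) (hp : 0 < p) (K : Set (Euc n))
    (hK : IsConvexBody K) (h0 : (0 : Euc n) ∈ interior K) :
    ∫⁻ u in Metric.sphere (0 : Euc n) 1,
        (curvFn n K u / ENNReal.ofReal (suppFn K u) ^ (p - 1)) ^ ((n : ℝ) / (n + p))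
        ∂(Measure.hausdorffMeasure ((n : ℝ) - 1)) =
      ∫⁻ x, (gaussCurv n K x /
          ENNReal.ofReal (suppFn K (gaussMap K x)) ^ ((p - 1) * n / p)) ^ (p / (n + p))
        ∂(bdryMeasure n K) := by
  obtain ⟨m, rfl⟩ : ∃ m, n = m + 1 := ⟨n - 1, by omega⟩
  have hdim : (((m + 1 : ℕ) : ℝ) - 1) = m := by push_cast; ring
  have hnp : 0 < (((m + 1 : ℕ) : ℝ)) := by exact_mod_cast hn
  set q : ℝ := ((m + 1 : ℕ) : ℝ) with hq
  unfold curvFn gaussCurv surfaceMeasure curv0 bdryMeasure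
  rw [← hq, hdim]
  set MH : Measure (Euc (m + 1)) := Measure.hausdorffMeasure (m : ℝ) with hMH
  set μ := MH.restrict (frontier K) with hμ
  set σ := MH.restrict (sphere (0 : Euc (m + 1)) 1) with hσ
  have : IsFiniteMeasure μ := ⟨by rw [hμ, Measure.restrict_apply_univ]; exact bdry_finite K hK h0⟩
  have : IsFiniteMeasure σ := ⟨by rw [hσ, Measure.restrict_apply_univ]; exact sphere_finite m⟩
  set ZB : Set (Euc (m + 1)) := {x | x ∈ frontier K ∧
      ¬ ∀ u v : Euc (m + 1), ‖u‖ = 1 → ‖v‖ = 1 → IsOuterNormalAt K u x →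
        IsOuterNormalAt K v x → u = v} with hZB
  set ZS : Set (Euc (m + 1)) := {u | ‖u‖ = 1 ∧
      ¬ ∀ x y, IsOuterNormalAt K u x → IsOuterNormalAt K u y → x = y} with hZS
  have hZB0 : MH ZB = 0 := bdry_reg K hK h0
  have hZS0 : MH ZS = 0 := sphere_reg K hK
  set B0 := frontier K \ toMeasurable MH ZB with hB0
  set S0 := sphere (0 : Euc (m + 1)) 1 \ toMeasurable MH ZS with hS0
  have hB0m : MeasurableSet B0 :=
    isClosed_frontier.measurableSet.diff (measurableSet_toMeasurable _ _)
  have hS0m : MeasurableSet S0 :=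
    isClosed_sphere.measurableSet.diff (measurableSet_toMeasurable _ _)
  have hμB : μ B0ᶜ = 0 := by
    rw [hμ, Measure.restrict_apply hB0m.compl]
    refine measure_mono_null ?_ ((measure_toMeasurable ZB).trans hZB0)
    rintro x ⟨h1, h2⟩
    by_contra h
    exact h1 ⟨h2, h⟩
  have hσS : σ S0ᶜ = 0 := by
    rw [hσ, Measure.restrict_apply hS0m.compl]
    refine measure_mono_null ?_ ((measure_toMeasurable ZS).trans hZS0)
    rintro x ⟨h1, h2⟩
    by_contra h
    exact h1 ⟨h2, h⟩
  have uB : ∀ x ∈ B0, ∀ u, ‖u‖ = 1 → IsOuterNormalAt K u x → u = gaussMap K x := by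
    intro x hx u hu hux
    have hs := gaussMap_spec K hK x hx.1
    by_contra hne
    exact hx.2 (subset_toMeasurable MH ZB ⟨hx.1, fun H => hne (H _ _ hu hs.1 hux hs.2)⟩)
  have uS : ∀ u ∈ S0, ∀ x, IsOuterNormalAt K u x → x = gaussMapInv K u := by
    intro u hu x hux
    have hu1 : ‖u‖ = 1 := by simpa using hu.1
    have hs := gaussMapInv_spec K hK u hu1
    by_contra hne
    exact hu.2 (subset_toMeasurable MH ZS ⟨hu1, fun H => hne (H _ _ hux hs)⟩)
  have cν : ContinuousOn (gaussMap K) B0 :=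
    selection_continuousOn (normalBundle K) (normalBundle_compact K hK.1) B0 _
      (fun x hx => gaussMap_spec K hK x hx.1) (fun x hx u hu => uB x hx u hu.1 hu.2)
  have cτ : ContinuousOn (gaussMapInv K) S0 := by
    refine selection_continuousOn (Prod.swap '' normalBundle K)
      ((normalBundle_compact K hK.1).image continuous_swap) S0 _ (fun u hu => ?_) ?_
    · have hu1 : ‖u‖ = 1 := by simpa using hu.1
      exact ⟨(gaussMapInv K u, u), ⟨hu1, gaussMapInv_spec K hK u hu1⟩, rfl⟩
    · rintro u hu x ⟨⟨x', u'⟩, h, he⟩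
      simp only [Prod.swap_prod_mk, Prod.mk.injEq] at he
      obtain ⟨rfl, rfl⟩ := he
      exact uS _ hu _ h.2
  classical
  set ν' := B0.piecewise (gaussMap K) (fun _ => 0) with hν'
  set τ' := S0.piecewise (gaussMapInv K) (fun _ => 0) with hτ'
  have mν : Measurable ν' := cν.measurable_piecewise continuousOn_const hB0m
  have mτ : Measurable τ' := cτ.measurable_piecewise continuousOn_const hS0m
  have eν : ∀ x ∈ B0, ν' x = gaussMap K x := fun x hx => piecewise_eq_of_mem _ _ _ hx
  have eτ : ∀ u ∈ S0, τ' u = gaussMapInv K u := fun x hx => piecewise_eq_of_mem _ _ _ hx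
  have aB : ∀ᵐ x ∂μ, x ∈ B0 := by rw [ae_iff]; exact hμB
  have aS : ∀ᵐ x ∂σ, x ∈ S0 := by rw [ae_iff]; exact hσS
  have aν : gaussMap K =ᵐ[μ] ν' := by filter_upwards [aB] with x hx using (eν x hx).symm
  have aτ : gaussMapInv K =ᵐ[σ] τ' := by filter_upwards [aS] with x hx using (eτ x hx).symm
  rw [Measure.map_congr aν, Measure.map_congr aτ]
  obtain ⟨L, hL⟩ := suppFn_lipschitz K hK.1 (hK.2.2.mono interior_subset)
  set e : ℝ := -(p - 1) * (q / (q + p)) with he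
  have main := abstract_duality μ σ ν' τ' mν mτ B0 S0 hB0m hS0m hμB hσS
    (fun x hx hs => by
      rw [eτ _ hs, eν x hx] at *
      exact (uS _ hs x (gaussMap_spec K hK x hx.1).2).symm)
    (fun u hu hb => by
      have hu1 : ‖u‖ = 1 := by simpa using hu.1
      rw [eν _ hb, eτ u hu] at *
      exact (uB _ hb u hu1 (gaussMapInv_spec K hK u hu1)).symm)
    (q / (q + p)) (p / (q + p)) (by positivity) (by positivity) (by field_simp)
    (fun u => ENNReal.ofReal (suppFn K u) ^ e)
    (hL.continuous.measurable.ennreal_ofReal.pow_const e)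
  convert main using 1
  · refine lintegral_congr fun u => ?_
    rw [div_eq_mul_inv, ENNReal.mul_rpow_of_nonneg _ _ (by positivity), ← ENNReal.rpow_neg,
      ← ENNReal.rpow_mul]
  · refine lintegral_congr_ae ?_
    filter_upwards [aν] with x hx
    rw [div_eq_mul_inv, ENNReal.mul_rpow_of_nonneg _ _ (by positivity), ← ENNReal.rpow_neg,
      ← ENNReal.rpow_mul, hx]
    congr 2
    rw [he]
    field_simp

end
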